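/- arXiv:2406.03270 — 2 statements merged into one kernel-verified Lean document; each statement's English description precedes it below -/
import Mathlib

section
/- If SOL(K, F) is nonempty, then SOL(K, F) coincides with the set of global minimizers of φ^c over K, and the optimal value of the problem min_{λ ∈ K} φ^c(λ) is zero: that is, λ ∈ SOL(K, F) if and only if λ ∈ K, φ^c(λ) = 0, and φ^c(λ) ≤ φ^c(μ) for all μ ∈ K. -/
open Matrix

/-!
Testing `ω = l` under the supremum gives `0 ≤ φ l` on `K`, so the zeros of `φ` in `K` are
minimizers. If `l` solves the variational inequality, every value under the supremum is nonpositive,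
so `φ l = 0`. Conversely, if `φ l ≤ 0`, testing `l + t (ω - l)` with `0 < t ≤ 1` gives
`0 ≤ F l (ω - l) + t Q (ω - l)`: the quadratic regularization disappears as `t` tends to `0`.
-/

section RegularizedGap

variable {E : Type*} [AddCommGroup E] [Module ℝ E]
  {K : Set E} {F : E → Module.Dual ℝ E} {Q : QuadraticForm ℝ E} {φ : E → ℝ} {l : E}

/-- The solution set `SOL(K, F)` of the variational inequality `VI(K, F)`. The operator `F` takes
values in the algebraic dual, so that no inner product on `E` has to be chosen. -/
def viSolutionSet (K : Set E) (F : E → Module.Dual ℝ E) : Set E :=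
  {l ∈ K | ∀ ω ∈ K, 0 ≤ F l (ω - l)}

/-- The function of `ω` whose supremum over `K` is the regularized gap function at `l`. The scalar
`c` and the matrix `A` enter through the single quadratic form `Q x = (c / 2) ⟨x, A x⟩`. -/
def regularizedGapObjective (F : E → Module.Dual ℝ E) (Q : QuadraticForm ℝ E) (l ω : E) : ℝ :=
  F l (l - ω) - Q (l - ω)

/-- `φ` agrees on `K` with the regularized gap function of `VI(K, F)`. This is a relation because
the supremum may be infinite when `Q` is degenerate; it need not be attained. -/
def IsRegularizedGap (K : Set E) (F : E → Module.Dual ℝ E) (Q : QuadraticForm ℝ E)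
    (φ : E → ℝ) : Prop :=
  ∀ l ∈ K, IsLUB (regularizedGapObjective F Q l '' K) (φ l)

lemma nonneg_of_forall_nonneg_add_mul {a b : ℝ}
    (h : ∀ t ∈ Set.Ioc (0 : ℝ) 1, 0 ≤ a + t * b) : 0 ≤ a := by
  have hlim : Filter.Tendsto (fun t : ℝ => a + t * b) (nhdsWithin 0 (Set.Ioi 0)) (nhds a) :=
    (Continuous.tendsto' (by fun_prop) 0 a (by simp)).mono_left nhdsWithin_le_nhds
  exact ge_of_tendsto hlim (Filter.eventually_of_mem (Ioc_mem_nhdsGT one_pos) h)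

lemma regularizedGapObjective_self (F : E → Module.Dual ℝ E) (Q : QuadraticForm ℝ E) (l : E) :
    regularizedGapObjective F Q l l = 0 := by
  simp [regularizedGapObjective]

lemma regularizedGapObjective_add_smul_sub (F : E → Module.Dual ℝ E) (Q : QuadraticForm ℝ E)
    (l ω : E) (t : ℝ) :
    regularizedGapObjective F Q l (l + t • (ω - l)) = -(t * (F l (ω - l) + t * Q (ω - l))) := by
  simp only [regularizedGapObjective, sub_add_cancel_left, map_neg, map_smul, QuadraticMap.map_neg,
    QuadraticMap.map_smul, smul_eq_mul]
  ring

lemma regularizedGapObjective_nonpos (hQ : ∀ x, 0 ≤ Q x) (hl : l ∈ viSolutionSet K F)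
    {ω : E} (hω : ω ∈ K) : regularizedGapObjective F Q l ω ≤ 0 := by
  have hF : F l (l - ω) ≤ 0 := by
    rw [← neg_sub, map_neg]
    exact neg_nonpos.mpr (hl.2 ω hω)
  exact sub_nonpos.mpr (hF.trans (hQ _))

namespace IsRegularizedGap

lemma nonneg (hφ : IsRegularizedGap K F Q φ) (hl : l ∈ K) : 0 ≤ φ l :=
  (hφ l hl).1 ⟨l, hl, regularizedGapObjective_self F Q l⟩

lemma nonpos_of_mem_viSolutionSet (hφ : IsRegularizedGap K F Q φ) (hQ : ∀ x, 0 ≤ Q x)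
    (hl : l ∈ viSolutionSet K F) : φ l ≤ 0 :=
  (hφ l hl.1).2 (Set.forall_mem_image.mpr fun _ => regularizedGapObjective_nonpos hQ hl)

lemma mem_viSolutionSet_of_nonpos (hφ : IsRegularizedGap K F Q φ) (hK : StarConvex ℝ l K)
    (hl : l ∈ K) (hφl : φ l ≤ 0) : l ∈ viSolutionSet K F := by
  refine ⟨hl, fun ω hω => nonneg_of_forall_nonneg_add_mul (b := Q (ω - l)) fun t ht => ?_⟩
  have hmem : l + t • (ω - l) ∈ K := hK.add_smul_sub_mem hω ht.1.le ht.2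
  have hle : regularizedGapObjective F Q l (l + t • (ω - l)) ≤ 0 :=
    ((hφ l hl).1 (Set.mem_image_of_mem _ hmem)).trans hφl
  rw [regularizedGapObjective_add_smul_sub, neg_nonpos] at hle
  exact nonneg_of_mul_nonneg_right hle ht.1

end IsRegularizedGap

theorem stmt_5_general (hK : Convex ℝ K) (hQ : ∀ x, 0 ≤ Q x) (hφ : IsRegularizedGap K F Q φ)
    (l : E) : l ∈ viSolutionSet K F ↔ l ∈ K ∧ φ l = 0 ∧ ∀ μ ∈ K, φ l ≤ φ μ := by
  constructor
  · intro hl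
    have hzero : φ l = 0 := le_antisymm (hφ.nonpos_of_mem_viSolutionSet hQ hl) (hφ.nonneg hl.1)
    exact ⟨hl.1, hzero, fun μ hμ => hzero.trans_le (hφ.nonneg hμ)⟩
  · rintro ⟨hl, hzero, -⟩
    exact hφ.mem_viSolutionSet_of_nonpos (hK.starConvex hl) hl hzero.le

end RegularizedGap

/-- If SOL(K, F) is nonempty, then SOL(K, F) coincides with the set of global minimizers
of φ^c over K and the optimal value of min_{λ ∈ K} φ^c(λ) is zero. -/
theorem stmt_5 (n : ℕ) (hn : 1 ≤ n) (K : Set (Fin n → ℝ))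
    (hKne : K.Nonempty) (hKcl : IsClosed K) (hKcv : Convex ℝ K)
    (F : (Fin n → ℝ) → (Fin n → ℝ)) (hF : Continuous F)
    (c : ℝ) (hc : 0 < c) (A : Matrix (Fin n) (Fin n) ℝ) (hA : A.PosDef)
    (φ : (Fin n → ℝ) → ℝ)
    (hφ : ∀ l, IsGreatest
      ((fun ω => F l ⬝ᵥ (l - ω) - c / 2 * ((l - ω) ⬝ᵥ A.mulVec (l - ω))) '' K) (φ l))
    (hSOL : ∃ l ∈ K, ∀ ω ∈ K, 0 ≤ F l ⬝ᵥ (ω - l)) :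
    ∀ l, ((l ∈ K ∧ ∀ ω ∈ K, 0 ≤ F l ⬝ᵥ (ω - l)) ↔
      (l ∈ K ∧ φ l = 0 ∧ ∀ μ ∈ K, φ l ≤ φ μ)) := by
  let Q : QuadraticForm ℝ (Fin n → ℝ) :=
    (c / 2) • LinearMap.BilinMap.toQuadraticMap ((dotProductBilin ℝ ℝ).compl₂ A.mulVecLin)
  have hQ : ∀ x, 0 ≤ Q x := fun x =>
    mul_nonneg (half_pos hc).le (hA.posSemidef.dotProduct_mulVec_nonneg x)
  exact stmt_5_general (F := fun l => dotProductBilin ℝ ℝ (F l)) hKcv hQ fun l _ => (hφ l).isLUB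
end

section
/- For every s ≥ 0, the relaxed feasible set satisfies R^c = R^c_1 ∪ R^c_2 ∪ R^c_3, where R^c_1 = {(λ, η) : b_l ≤ λ ≤ b_u, η ≥ c(λ − b_l), η(λ − b_l) − (c/2)(λ − b_l)² ≤ s}, R^c_2 = {(λ, η) : b_l ≤ λ ≤ b_u, |η| ≤ √(2cs), c(λ − b_u) ≤ η ≤ c(λ − b_l)}, and R^c_3 = {(λ, η) : b_l ≤ λ ≤ b_u, η ≤ c(λ − b_u), η(λ − b_u) − (c/2)(λ − b_u)² ≤ s}. -/
/-!
In the variable `t = l - ω` the gap function maximises the parabola `η * t - c / 2 * t ^ 2`, with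
vertex `t = η / c`, over `[l - bu, l - bl]`. If the vertex lies to the right (left) of this
interval, the parabola is monotone (antitone) there and the maximum is attained at `ω = bl`
(`ω = bu`). Otherwise the maximum is the vertex value `η ^ 2 / (2 * c)`, which is at most `s`
exactly when `|η| ≤ √(2 * c * s)`.
-/

open Set

/-- The objective of the regularized gap function, as a function of the displacement `t = l - ω`
from the primal variable `l` to the competitor `ω`, with multiplier `η` and regularization
parameter `c`. -/
def gapObjective {K : Type*} [Field K] (c η t : K) : K :=
  η * t - c / 2 * t ^ 2

namespace gapObjective

section Field

variable {K : Type*} [Field K] [LinearOrder K] [IsStrictOrderedRing K] {a b c η : K}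

lemma sub_eq (c η x y : K) :
    gapObjective c η y - gapObjective c η x = (y - x) * ((η - c * x) + (η - c * y)) / 2 := by
  unfold gapObjective
  ring

lemma monotoneOn (c η : K) : MonotoneOn (gapObjective c η) {t | c * t ≤ η} := by
  intro x hx y hy hxy
  rw [← sub_nonneg, sub_eq]
  have hslope : 0 ≤ (η - c * x) + (η - c * y) := add_nonneg (sub_nonneg.2 hx) (sub_nonneg.2 hy)
  exact div_nonneg (mul_nonneg (sub_nonneg.2 hxy) hslope) zero_le_two

lemma antitoneOn (c η : K) : AntitoneOn (gapObjective c η) {t | η ≤ c * t} := by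
  intro x hx y hy hxy
  rw [← sub_nonpos, sub_eq]
  have hslope : (η - c * x) + (η - c * y) ≤ 0 := add_nonpos (sub_nonpos.2 hx) (sub_nonpos.2 hy)
  exact div_nonpos_of_nonpos_of_nonneg
    (mul_nonpos_of_nonneg_of_nonpos (sub_nonneg.2 hxy) hslope) zero_le_two

lemma isGreatest_right (hc : 0 ≤ c) (hab : a ≤ b) (hη : c * b ≤ η) :
    IsGreatest (gapObjective c η '' Icc a b) (gapObjective c η b) :=
  ((monotoneOn c η).mono fun _ ht => (mul_le_mul_of_nonneg_left ht.2 hc).trans hη).map_isGreatest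
    (isGreatest_Icc hab)

lemma isGreatest_left (hc : 0 ≤ c) (hab : a ≤ b) (hη : η ≤ c * a) :
    IsGreatest (gapObjective c η '' Icc a b) (gapObjective c η a) :=
  ((antitoneOn c η).mono fun _ ht => hη.trans (mul_le_mul_of_nonneg_left ht.1 hc)).map_isLeast
    (isLeast_Icc hab)

lemma eq_vertex_sub_sq (hc : c ≠ 0) (η t : K) :
    gapObjective c η t = η ^ 2 / (2 * c) - c / 2 * (t - η / c) ^ 2 := by
  unfold gapObjective
  field_simp
  ring

lemma isGreatest_vertex (hc : 0 < c) (ha : c * a ≤ η) (hb : η ≤ c * b) :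
    IsGreatest (gapObjective c η '' Icc a b) (η ^ 2 / (2 * c)) := by
  refine ⟨⟨η / c, ⟨(le_div_iff₀' hc).2 ha, (div_le_iff₀' hc).2 hb⟩, ?_⟩, ?_⟩
  · simp [eq_vertex_sub_sq hc.ne']
  · rintro _ ⟨t, -, rfl⟩
    rw [eq_vertex_sub_sq hc.ne']
    exact sub_le_self _ (by positivity)

lemma image_sub_Icc (c η l bl bu : K) :
    (fun ω => η * (l - ω) - c / 2 * (l - ω) ^ 2) '' Icc bl bu =
      gapObjective c η '' Icc (l - bu) (l - bl) := by
  rw [← image_const_sub_Icc, image_image]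
  rfl

end Field

lemma sq_div_two_mul_le_iff_abs_le_sqrt {c s : ℝ} (hc : 0 < c) (hs : 0 ≤ s) (η : ℝ) :
    η ^ 2 / (2 * c) ≤ s ↔ |η| ≤ √(2 * c * s) := by
  rw [div_le_iff₀' (by positivity), Real.le_sqrt (abs_nonneg η) (by positivity), sq_abs]

theorem le_iff_of_isGreatest {a b c η m s : ℝ} (hc : 0 < c) (hs : 0 ≤ s)
    (hm : IsGreatest (gapObjective c η '' Icc a b) m) :
    m ≤ s ↔ (c * b ≤ η ∧ gapObjective c η b ≤ s) ∨
      (|η| ≤ √(2 * c * s) ∧ c * a ≤ η ∧ η ≤ c * b) ∨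
      (η ≤ c * a ∧ gapObjective c η a ≤ s) := by
  have hab : a ≤ b := nonempty_Icc.1 hm.nonempty.of_image
  have right (hη : c * b ≤ η) : m = gapObjective c η b :=
    hm.unique (isGreatest_right hc.le hab hη)
  have left (hη : η ≤ c * a) : m = gapObjective c η a :=
    hm.unique (isGreatest_left hc.le hab hη)
  have vertex (ha : c * a ≤ η) (hb : η ≤ c * b) : m = η ^ 2 / (2 * c) :=
    hm.unique (isGreatest_vertex hc ha hb)
  rw [← sq_div_two_mul_le_iff_abs_le_sqrt hc hs]
  constructor
  · intro hms
    rcases le_total (c * b) η with hb | hb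
    · exact .inl ⟨hb, right hb ▸ hms⟩
    rcases le_total η (c * a) with ha | ha
    · exact .inr (.inr ⟨ha, left ha ▸ hms⟩)
    · exact .inr (.inl ⟨vertex ha hb ▸ hms, ha, hb⟩)
  · rintro (⟨hb, hle⟩ | ⟨hle, ha, hb⟩ | ⟨ha, hle⟩)
    · exact (right hb).trans_le hle
    · exact (vertex ha hb).trans_le hle
    · exact (left ha).trans_le hle

end gapObjective

/-- For every s ≥ 0, the relaxed feasible set R^c = {(λ, η) : b_l ≤ λ ≤ b_u, φ^c(λ, η) ≤ s}
equals R^c_1 ∪ R^c_2 ∪ R^c_3. -/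
theorem stmt_15 (bl bu : ℝ) (hb : bl < bu) (c : ℝ) (hc : 0 < c)
    (φ : ℝ → ℝ → ℝ)
    (hφ : ∀ l η, IsGreatest
      ((fun ω => η * (l - ω) - c / 2 * (l - ω) ^ 2) '' Set.Icc bl bu) (φ l η))
    (s : ℝ) (hs : 0 ≤ s) :
    {p : ℝ × ℝ | (bl ≤ p.1 ∧ p.1 ≤ bu) ∧ φ p.1 p.2 ≤ s} =
      {p : ℝ × ℝ | (bl ≤ p.1 ∧ p.1 ≤ bu) ∧ c * (p.1 - bl) ≤ p.2 ∧
          p.2 * (p.1 - bl) - c / 2 * (p.1 - bl) ^ 2 ≤ s} ∪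
        {p : ℝ × ℝ | (bl ≤ p.1 ∧ p.1 ≤ bu) ∧ |p.2| ≤ Real.sqrt (2 * c * s) ∧
          c * (p.1 - bu) ≤ p.2 ∧ p.2 ≤ c * (p.1 - bl)} ∪
        {p : ℝ × ℝ | (bl ≤ p.1 ∧ p.1 ≤ bu) ∧ p.2 ≤ c * (p.1 - bu) ∧
          p.2 * (p.1 - bu) - c / 2 * (p.1 - bu) ^ 2 ≤ s} := by
  ext ⟨l, η⟩
  have hmax : IsGreatest (gapObjective c η '' Icc (l - bu) (l - bl)) (φ l η) :=
    gapObjective.image_sub_Icc c η l bl bu ▸ hφ l η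
  simp only [mem_union, mem_ofPred_eq, gapObjective.le_iff_of_isGreatest hc hs hmax, gapObjective,
    and_or_left, or_assoc]
end
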